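/- Let s ∈ ℂ ⊗ ℂ^d ⊗ ℂ^d be a 3-tensor with trivial first factor (i.e., essentially a matrix) and let t ∈ ℂ² ⊗ ℂⁿ ⊗ ℂᵐ be a matrix pencil. Then rank(t ⊠ s) = rank(t ⊗ s) = rank(t) · rank(s), where ⊠ is the tensor Kronecker product and ⊗ the tensor product. -/

import Mathlib

open scoped BigOperators

universe u v

noncomputable section

variable {F : Type v}

/-- Tensor rank: the least `r` such that `T` is a sum of `r` simple tensors. -/
def tRank {ι : Type*} [Fintype ι] [DecidableEq ι] {γ : ι → Type*} [∀ i, Fintype (γ i)]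
    [Field F] (T : (∀ i, γ i) → F) : ℕ :=
  sInf {r | ∃ v : Fin r → ∀ i, γ i → F, ∀ x, T x = ∑ j, ∏ i, v j i (x i)}

/-- Tensor product of a `ι`-indexed tensor and a `κ`-indexed tensor (no grouping). -/
def tProd [Field F] {ι κ : Type*} {γ : ι → Type u} {δ : κ → Type u}
    (S : (∀ i, γ i) → F) (T : (∀ j, δ j) → F) : (∀ i : ι ⊕ κ, Sum.elim γ δ i) → F :=
  fun x => S (fun i => x (Sum.inl i)) * T (fun j => x (Sum.inr j))

instance sumElimFintype {ι κ : Type*} {γ : ι → Type u} {δ : κ → Type u}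
    [hγ : ∀ i, Fintype (γ i)] [hδ : ∀ j, Fintype (δ j)] :
    ∀ i : ι ⊕ κ, Fintype (Sum.elim γ δ i)
  | Sum.inl i => hγ i
  | Sum.inr j => hδ j

/-- Tensor Kronecker product of two tensors with the same index set. -/
def tKron [Field F] {ι : Type*} {γ δ : ι → Type*}
    (S : (∀ i, γ i) → F) (T : (∀ i, δ i) → F) : (∀ i, γ i × δ i) → F :=
  fun x => S (fun i => (x i).1) * T (fun i => (x i).2)

/-- `n`-fold tensor product power of a tensor (no grouping), a tensor indexed by `Fin n × ι`. -/
def tPow [Field F] {ι : Type*} {γ : ι → Type*} (T : (∀ i, γ i) → F) (n : ℕ) :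
    (∀ p : Fin n × ι, γ p.2) → F :=
  fun x => ∏ j : Fin n, T (fun i => x (j, i))

/-- Restriction `t ≥ s`: `s` is obtained from `t` by applying linear maps on each factor. -/
def Restricts [Field F] {ι : Type*} [Fintype ι] [DecidableEq ι]
    {γ : ι → Type*} {δ : ι → Type*} [∀ i, Fintype (γ i)]
    (t : (∀ i, γ i) → F) (s : (∀ i, δ i) → F) : Prop :=
  ∃ A : ∀ i, δ i → γ i → F, ∀ x, (∑ y : ∀ i, γ i, (∏ i, A i (x i) (y i)) * t y) = s x

/-- Degeneration `t ⊵_d^e s` with approximation degree `d` and error degree `e`. -/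
def Degen [Field F] {ι : Type*} [Fintype ι] [DecidableEq ι]
    {γ : ι → Type*} {δ : ι → Type*} [∀ i, Fintype (γ i)]
    (t : (∀ i, γ i) → F) (s : (∀ i, δ i) → F) (d e : ℕ) : Prop :=
  ∃ A : ∀ i, δ i → γ i → Polynomial F, ∃ s' : Fin e → ((∀ i, δ i) → F),
    ∀ x, (∑ y : ∀ i, γ i, (∏ i, A i (x i) (y i)) * Polynomial.C (t y)) =
      Polynomial.C (s x) * Polynomial.X ^ d +
      ∑ j : Fin e, Polynomial.C (s' j x) * Polynomial.X ^ (d + 1 + (j : ℕ))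

/-- The rank-`r` order-`k` unit tensor `⟨r⟩_k = ∑_j b_j^{⊗k}`. -/
def unitTensor (F : Type v) [Field F] (r k : ℕ) : (Fin k → Fin r) → F :=
  fun x => ∑ j : Fin r, ∏ i : Fin k, if x i = j then 1 else 0

/-- The tensor `W_k = ∑_{type(i)=(k-1,1)} b_{i₁} ⊗ ⋯ ⊗ b_{i_k}` in `(F²)^{⊗k}`. -/
def Wtensor (F : Type v) [Field F] (k : ℕ) : (Fin k → Fin 2) → F :=
  fun x => if (∑ i, (x i : ℕ)) = 1 then 1 else 0

/-- `R^e(s)`: border rank with error degree at most `e`. -/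
def errRank [Field F] {k : ℕ} {γ : Fin k → Type*} [∀ i, Fintype (γ i)]
    (e : ℕ) (s : (∀ i, γ i) → F) : ℕ :=
  sInf {r | ∃ d, Degen (unitTensor F r k) s d e}

/-- `R_d(s)`: border rank with approximation degree `d`. -/
def degRank [Field F] {k : ℕ} {γ : Fin k → Type*} [∀ i, Fintype (γ i)]
    (d : ℕ) (s : (∀ i, γ i) → F) : ℕ :=
  sInf {r | ∃ e, Degen (unitTensor F r k) s d e}

/-- Border rank over ℂ: the least `r` such that `T` is a limit of tensors of rank `≤ r`. -/
def tBorderRank {ι : Type*} [Fintype ι] [DecidableEq ι] {γ : ι → Type*} [∀ i, Fintype (γ i)]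
    (T : (∀ i, γ i) → ℂ) : ℕ :=
  sInf {r | T ∈ closure {T' : (∀ i, γ i) → ℂ | tRank T' ≤ r}}

end

/-!
A matrix `s` of rank `r` makes `t ⊠ s` equivalent to `r` independent copies of the pencil `t`, so
everything rests on a formula for the rank of a pencil `A, B : V → W` in which each ingredient is
multiplied by `r` when passing to `r` copies. If no vector is killed by both maps, the ranges span
`W`, and `ker B` has the least dimension among all members of the pencil (a change of basis of `K²`
arranges this), then, as in Grigoriev and JáJá,
`rank (A, B) = dim W + max (dim (ker B)) (max_μ δ μ)`,
where `δ μ` counts the Jordan blocks of size at least two of the pencil for the eigenvalue `μ`.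

For the lower bound, a decomposition of length `R` factors the pencil through two diagonal `R × R`
matrices followed by a surjection `g` onto `W`, and `dim (ker g) = R - dim W` bounds the dimension
of the kernel of a generic member, and also `δ 0`. For the upper bound, removing a suitable
rank-one term lowers the maximum by one; once it is zero, `B` is injective and there are no Jordan
blocks of size at least two. If moreover `dim V = dim W`, then `B⁻¹ A` is diagonalizable and the
rank is `dim V`. Otherwise the dual pencil has maximum `dim W - dim V`, and removing that many
rank-one terms from it leaves a pencil of the first kind.
-/

open Module
open scoped Kronecker

/-! ### Rank of a pencil of linear maps -/

section PencilRank

variable {K V W : Type*} [Field K] [AddCommGroup V] [Module K V] [AddCommGroup W] [Module K W]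

/-- The pencil `A, B` of linear maps, seen as a tensor in `K² ⊗ W ⊗ V*`, has tensor rank at most
`R`: `(A, B) = ∑ i, (a i, b i) ⊗ w i ⊗ φ i`. -/
def PencilRankLE (A B : V →ₗ[K] W) (R : ℕ) : Prop :=
  ∃ (a b : Fin R → K) (φ : Fin R → Dual K V) (w : Fin R → W),
    A = ∑ i, a i • (φ i).smulRight (w i) ∧ B = ∑ i, b i • (φ i).smulRight (w i)

namespace PencilRankLE

variable {A B A' B' : V →ₗ[K] W} {R S : ℕ}

lemma zero : PencilRankLE (0 : V →ₗ[K] W) 0 R :=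
  ⟨0, 0, 0, 0, by simp, by simp⟩

lemma smulRight (a b : K) (φ : Dual K V) (w : W) :
    PencilRankLE (a • φ.smulRight w) (b • φ.smulRight w) 1 :=
  ⟨fun _ ↦ a, fun _ ↦ b, fun _ ↦ φ, fun _ ↦ w, by simp, by simp⟩

lemma symm (h : PencilRankLE A B R) : PencilRankLE B A R := by
  obtain ⟨a, b, φ, w, hA, hB⟩ := h
  exact ⟨b, a, φ, w, hB, hA⟩

lemma sub_smul (h : PencilRankLE A B R) (μ : K) : PencilRankLE (A - μ • B) B R := by
  obtain ⟨a, b, φ, w, rfl, rfl⟩ := h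
  refine ⟨a - μ • b, b, φ, w, ?_, rfl⟩
  simp [Finset.smul_sum, ← Finset.sum_sub_distrib, sub_smul, mul_smul]

lemma add (h : PencilRankLE A B R) (h' : PencilRankLE A' B' S) :
    PencilRankLE (A + A') (B + B') (R + S) := by
  obtain ⟨a, b, φ, w, rfl, rfl⟩ := h
  obtain ⟨a', b', φ', w', rfl, rfl⟩ := h'
  exact ⟨Fin.append a a', Fin.append b b', Fin.append φ φ', Fin.append w w',
    by simp [Fin.sum_univ_add], by simp [Fin.sum_univ_add]⟩

lemma mono (h : PencilRankLE A B R) (hRS : R ≤ S) : PencilRankLE A B S := by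
  obtain ⟨k, rfl⟩ := Nat.exists_eq_add_of_le hRS
  simpa using h.add (zero (R := k))

lemma comp {V' W' : Type*} [AddCommGroup V'] [Module K V'] [AddCommGroup W'] [Module K W']
    (h : PencilRankLE A B R) (g : W →ₗ[K] W') (f : V' →ₗ[K] V) :
    PencilRankLE (g ∘ₗ A ∘ₗ f) (g ∘ₗ B ∘ₗ f) R := by
  obtain ⟨a, b, φ, w, rfl, rfl⟩ := h
  refine ⟨a, b, fun i ↦ φ i ∘ₗ f, g ∘ w, ?_, ?_⟩ <;> ext x <;> simp

lemma of_dualMap [FiniteDimensional K W] (h : PencilRankLE A.dualMap B.dualMap R) :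
    PencilRankLE A B R := by
  obtain ⟨a, b, Φ, ψ, hA, hB⟩ := h
  refine ⟨a, b, ψ, fun i ↦ (evalEquiv K W).symm (Φ i), ?_, ?_⟩ <;> ext x <;>
    refine eval_apply_injective K (LinearMap.ext fun f ↦ ?_)
  · simpa [mul_comm, mul_left_comm] using LinearMap.congr_fun (LinearMap.congr_fun hA f) x
  · simpa [mul_comm, mul_left_comm] using LinearMap.congr_fun (LinearMap.congr_fun hB f) x

/-- Splitting off `x` costs one rank-one term: `y ↦ y - (h y / h x) • x` projects `U` onto
`U ⊓ ker h`, and the pencil differs from its composite with this projection by a pencil of rank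
one, because `A x` and `B x` are proportional. -/
lemma domRestrict_of_inf_ker {U : Submodule K V} {h : Dual K V} {x : V} {z : W} {a b : K}
    (hR : PencilRankLE (A.domRestrict (U ⊓ LinearMap.ker h))
      (B.domRestrict (U ⊓ LinearMap.ker h)) R)
    (hx : x ∈ U) (hhx : h x ≠ 0) (hA : A x = a • z) (hB : B x = b • z) :
    PencilRankLE (A.domRestrict U) (B.domRestrict U) (R + 1) := by
  let π : U →ₗ[K] ↥(U ⊓ LinearMap.ker h) :=
    LinearMap.codRestrict _ (U.subtype - ((h x)⁻¹ • h ∘ₗ U.subtype).smulRight x) fun y ↦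
      ⟨sub_mem y.2 (U.smul_mem _ hx), by simp; field_simp; simp⟩
  have split (C : V →ₗ[K] W) (c : K) (hC : C x = c • z) :
      C.domRestrict U = LinearMap.id ∘ₗ C.domRestrict (U ⊓ LinearMap.ker h) ∘ₗ π +
        c • ((h x)⁻¹ • h ∘ₗ U.subtype).smulRight z := by
    ext y
    simp [π, LinearMap.codRestrict, map_sub, hC, smul_smul, mul_comm]
  rw [split A a hA, split B b hB]
  exact (hR.comp _ π).add (smulRight a b _ z)

end PencilRankLE

end PencilRank

/-! ### The upper bound -/

section EigenCircuit

variable {K V W : Type*} [Field K] [AddCommGroup V] [Module K V] [AddCommGroup W] [Module K W]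

/-- The vectors of `ker A` that start a Jordan chain of length at least two inside `U` for the
eigenvalue `0` of the pencil `A - λ B`: those `x ∈ U` with `A x = 0` and `B x ∈ A U`. -/
def jordanKer (A B : V →ₗ[K] W) (U : Submodule K V) : Submodule K V :=
  LinearMap.ker A ⊓ U ⊓ (U.map A).comap B

/-- Distinct eigenvalues `l ∈ J` of the pencil `A - λ B`, with independent eigenvectors `u l ∈ U`
whose images under `B` satisfy a linear relation with nonzero coefficients `d l`. -/
structure EigenCircuit (A B : V →ₗ[K] W) (U : Submodule K V) (J : Finset K) (u : K → V)
    (d : K → K) : Prop where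
  nonempty : J.Nonempty
  mem : ∀ l ∈ J, u l ∈ U
  apply_eq : ∀ l ∈ J, A (u l) = l • B (u l)
  linearIndepOn : LinearIndepOn K u J
  coeff_ne_zero : ∀ l ∈ J, d l ≠ 0
  sum_eq_zero : ∑ l ∈ J, d l • B (u l) = 0

variable {A B : V →ₗ[K] W} {U : Submodule K V} {J : Finset K} {u : K → V} {d : K → K}

lemma sub_smul_apply_sum (hu : ∀ l ∈ J, A (u l) = l • B (u l)) (μ : K) (c : K → K) :
    (A - μ • B) (∑ l ∈ J, c l • u l) = ∑ l ∈ J, (c l * (l - μ)) • B (u l) := by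
  rw [map_sum]
  refine Finset.sum_congr rfl fun l hl ↦ ?_
  simp [hu l hl, mul_smul, sub_smul]

/-- A relation between the `u l` becomes, on applying `A - l B`, a relation between the `B (u k)`
with `k ≠ l`. -/
lemma linearIndepOn_of_diff_singleton (hu : ∀ l ∈ J, A (u l) = l • B (u l))
    (hu0 : ∀ l ∈ J, u l ≠ 0) (h : ∀ l ∈ J, LinearIndepOn K (B ∘ u) (↑J \ {l})) :
    LinearIndepOn K u ↑J := by
  classical
  rw [linearIndepOn_finset_iff]
  intro c hc l hl
  have hsum : ∑ k ∈ J.erase l, (c k * (k - l)) • B (u k) = 0 := by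
    rw [Finset.sum_erase _ (by simp), ← sub_smul_apply_sum hu, hc, map_zero]
  have hck : ∀ k ∈ J, k ≠ l → c k = 0 := fun k hk hkl ↦ by
    specialize h l hl
    rw [← Finset.coe_erase, linearIndepOn_finset_iff] at h
    simpa [sub_eq_zero, hkl] using h _ hsum k (Finset.mem_erase.mpr ⟨hkl, hk⟩)
  rw [Finset.sum_eq_single_of_mem l hl fun k hk hkl ↦ by simp [hck k hk hkl]] at hc
  exact (smul_eq_zero.mp hc).resolve_right (hu0 l hl)

lemma exists_minimal_not_linearIndepOn {ι : Type*} {E : Set ι} [FiniteDimensional K V]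
    (hE : E.Infinite) (v : ι → V) :
    ∃ J : Finset ι, ↑J ⊆ E ∧ ¬ LinearIndepOn K v J ∧ ∀ j ∈ J, LinearIndepOn K v (↑J \ {j}) := by
  classical
  obtain ⟨t, htE, ht⟩ := hE.exists_subset_card_eq (finrank K V + 1)
  have hdep : ¬ LinearIndepOn K v (t : Set ι) := fun h ↦ by
    have := LinearIndependent.fintype_card_le_finrank h
    simp [ht] at this
  obtain ⟨J, ⟨hJE, hJ⟩, hmin⟩ := exists_minimal_of_wellFoundedLT
    (fun J : Finset ι ↦ ↑J ⊆ E ∧ ¬ LinearIndepOn K v (J : Set ι)) ⟨t, htE, hdep⟩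
  refine ⟨J, hJE, hJ, fun j hj ↦ ?_⟩
  by_contra hdep
  rw [← Finset.coe_erase] at hdep
  have := hmin ⟨(Finset.coe_subset.mpr (J.erase_subset j)).trans hJE, hdep⟩ (J.erase_subset j)
  exact Finset.notMem_erase j J (this hj)

lemma exists_relation_of_minimal_not_linearIndepOn {ι : Type*} {J : Finset ι} {v : ι → V}
    (hJ : ¬ LinearIndepOn K v J) (hmin : ∀ j ∈ J, LinearIndepOn K v (↑J \ {j})) :
    J.Nonempty ∧ ∃ d : ι → K, (∀ j ∈ J, d j ≠ 0) ∧ ∑ j ∈ J, d j • v j = 0 := by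
  classical
  simp only [linearIndepOn_finset_iff, not_forall] at hJ
  obtain ⟨d, hd, i, hi, hdi⟩ := hJ
  refine ⟨⟨i, hi⟩, d, fun j hj hdj ↦ hdi ?_, hd⟩
  have hij : i ≠ j := by rintro rfl; exact hdi hdj
  specialize hmin j hj
  rw [← Finset.coe_erase, linearIndepOn_finset_iff] at hmin
  exact hmin d (by rw [Finset.sum_erase _ (by simp [hdj]), hd]) i (Finset.mem_erase.mpr ⟨hij, hi⟩)

lemma exists_eigenCircuit [Infinite K] [FiniteDimensional K W] {E : Set K} (hE : E.Finite)
    (h : ∀ μ : K, LinearMap.ker (A - μ • B) ⊓ U ≠ ⊥) :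
    ∃ (J : Finset K) (u : K → V) (d : K → K), EigenCircuit A B U J u d ∧ ∀ l ∈ J, l ∉ E := by
  choose u hu hu0 using fun μ ↦ Submodule.exists_mem_ne_zero_of_ne_bot (h μ)
  have hAu (l : K) : A (u l) = l • B (u l) := by simpa [sub_eq_zero] using (hu l).1
  obtain ⟨J, hJE, hJ, hmin⟩ := exists_minimal_not_linearIndepOn (K := K) hE.infinite_compl (B ∘ u)
  obtain ⟨hne, d, hd, hsum⟩ := exists_relation_of_minimal_not_linearIndepOn hJ hmin
  exact ⟨J, u, d, ⟨hne, fun l _ ↦ (hu l).2, fun l _ ↦ hAu l,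
    linearIndepOn_of_diff_singleton (fun l _ ↦ hAu l) (fun l _ ↦ hu0 l) hmin, hd, hsum⟩,
    fun l hl ↦ hJE hl⟩

end EigenCircuit

section KernelDimension

variable {K V W : Type*} [Field K] [AddCommGroup V] [Module K V] [AddCommGroup W] [Module K W]
variable {A B : V →ₗ[K] W} {U : Submodule K V} {J : Finset K} {u : K → V} {d : K → K}

lemma finrank_ker_domRestrict (A : V →ₗ[K] W) (U : Submodule K V) :
    finrank K (LinearMap.ker (A.domRestrict U)) = finrank K ↥(LinearMap.ker A ⊓ U) := by
  rw [← Submodule.finrank_map_subtype_eq, LinearMap.ker_domRestrict, Submodule.map_comap_subtype,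
    inf_comm]

lemma finrank_map_add_finrank_ker_inf [FiniteDimensional K V] (A : V →ₗ[K] W)
    (U : Submodule K V) :
    finrank K (U.map A) + finrank K ↥(LinearMap.ker A ⊓ U) = finrank K U := by
  rw [← finrank_ker_domRestrict, ← LinearMap.range_domRestrict,
    LinearMap.finrank_range_add_finrank_ker]

section

variable [FiniteDimensional K V] {S : Submodule K V} {h : Dual K V} {x : V}

lemma finrank_inf_ker_lt (hx : x ∈ S) (hhx : h x ≠ 0) :
    finrank K ↥(S ⊓ LinearMap.ker h) < finrank K S :=
  Submodule.finrank_lt_finrank_of_lt <| inf_le_left.lt_of_ne fun heq ↦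
    hhx (heq.ge hx).2

lemma finrank_le_finrank_inf_ker_add_one (S : Submodule K V) (h : Dual K V) :
    finrank K S ≤ finrank K ↥(S ⊓ LinearMap.ker h) + 1 := by
  have hle := (S.map h).finrank_le
  rw [finrank_self] at hle
  rw [inf_comm, ← finrank_map_add_finrank_ker_inf h S]
  lia

end

lemma finite_setOf_finrank_ker_lt [FiniteDimensional K V] (A B : V →ₗ[K] W) :
    {μ : K | finrank K (LinearMap.ker B) < finrank K (LinearMap.ker (A - μ • B))}.Finite := by
  obtain ⟨C, hC⟩ := Submodule.exists_isCompl (LinearMap.ker B)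
  obtain ⟨L, hL⟩ := (B.domRestrict C).exists_leftInverse_of_injective <|
    LinearMap.ker_eq_bot.mpr (LinearMap.injective_domRestrict_iff.mpr hC.disjoint.symm)
  refine (Module.End.finite_hasEigenvalue (L ∘ₗ A.domRestrict C)).subset fun μ hμ ↦ ?_
  by_contra hne
  have hdisj : Disjoint (LinearMap.ker (A - μ • B)) C := by
    refine Submodule.disjoint_def.mpr fun x hx hxC ↦ by_contra fun hx0 ↦ hne ?_
    have hAx : A x = μ • B x := by simpa [sub_eq_zero] using hx
    refine Module.End.hasEigenvalue_of_hasEigenvector (x := ⟨x, hxC⟩)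
      ⟨Module.End.mem_eigenspace_iff.mpr ?_, by simpa using hx0⟩
    simpa [hAx] using congr(μ • $(LinearMap.congr_fun hL ⟨x, hxC⟩))
  have hle := Submodule.finrank_add_finrank_le_of_disjoint hdisj
  have heq := Submodule.finrank_add_eq_of_isCompl hC
  exact absurd hμ (by simp only [Set.mem_ofPred_eq]; lia)

lemma finite_setOf_finrank_ker_inf_lt [FiniteDimensional K V] (A B : V →ₗ[K] W)
    (U : Submodule K V) :
    {μ : K | finrank K ↥(LinearMap.ker B ⊓ U) < finrank K ↥(LinearMap.ker (A - μ • B) ⊓ U)}.Finite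
      := by
  simp only [← finrank_ker_domRestrict]
  exact finite_setOf_finrank_ker_lt (A.domRestrict U) (B.domRestrict U)

section

lemma jordanKer_le (A B : V →ₗ[K] W) (U : Submodule K V) :
    jordanKer A B U ≤ LinearMap.ker A ⊓ U :=
  inf_le_left

lemma jordanKer_mono {U' : Submodule K V} (hU : U' ≤ U) : jordanKer A B U' ≤ jordanKer A B U :=
  inf_le_inf (inf_le_inf_left _ hU) (Submodule.comap_mono (Submodule.map_mono hU))

variable [FiniteDimensional K V] {h : Dual K V} {x y : V}

lemma finrank_jordanKer_inf_ker_lt (hx : x ∈ jordanKer A B U) (hhx : h x ≠ 0) :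
    finrank K (jordanKer A B (U ⊓ LinearMap.ker h)) < finrank K (jordanKer A B U) :=
  lt_of_le_of_lt (Submodule.finrank_mono <| le_inf (jordanKer_mono inf_le_left)
    ((jordanKer_le A B _).trans (inf_le_right.trans inf_le_right))) (finrank_inf_ker_lt hx hhx)

lemma finrank_jordanKer_inf_ker_lt_finrank_ker_inf (hx : x ∈ LinearMap.ker A ⊓ U) (hy : y ∈ U)
    (hxy : A y = B x) (hhy : h y ≠ 0) :
    finrank K (jordanKer A B (U ⊓ LinearMap.ker h)) < finrank K ↥(LinearMap.ker A ⊓ U) := by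
  refine Submodule.finrank_lt_finrank_of_lt <|
    ((jordanKer_le A B _).trans (inf_le_inf_left _ inf_le_left)).lt_of_not_ge fun hle ↦ hhy ?_
  obtain ⟨y', ⟨hy'U, hy'h⟩, hy'⟩ := (hle hx).2
  have hsub : y - y' ∈ LinearMap.ker A ⊓ U := ⟨by simp [hxy, hy'], sub_mem hy hy'U⟩
  have hhsub : h (y - y') = 0 := (hle hsub).1.2.2
  rw [← sub_add_cancel y y', map_add, hhsub, hy'h, add_zero]

end

namespace EigenCircuit

lemma sum_mem (hC : EigenCircuit A B U J u d) (c : K → K) : ∑ l ∈ J, c l • u l ∈ U :=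
  Submodule.sum_mem _ fun l hl ↦ U.smul_mem _ (hC.mem l hl)

lemma sum_mem_jordanKer (hC : EigenCircuit A B U J u d) {μ : K} (hμ : μ ∉ J) :
    ∑ l ∈ J, (d l / (l - μ)) • u l ∈ jordanKer (A - μ • B) B U := by
  have hne (l) (hl : l ∈ J) : l - μ ≠ 0 := sub_ne_zero.mpr (ne_of_mem_of_not_mem hl hμ)
  refine ⟨⟨?_, hC.sum_mem _⟩, ∑ l ∈ J, (d l / (l - μ) / (l - μ)) • u l, hC.sum_mem _, ?_⟩
  · change (A - μ • B) _ = 0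
    rw [sub_smul_apply_sum hC.apply_eq, ← hC.sum_eq_zero]
    exact Finset.sum_congr rfl fun l hl ↦ by rw [div_mul_cancel₀ _ (hne l hl)]
  · rw [sub_smul_apply_sum hC.apply_eq, map_sum]
    exact Finset.sum_congr rfl fun l hl ↦ by rw [div_mul_cancel₀ _ (hne l hl), map_smul]

-- The term `l = μ` of the sum vanishes, since `d μ / 0 = 0`.
lemma sub_smul_apply_sum_of_mem (hC : EigenCircuit A B U J u d) {μ : K} (hμ : μ ∈ J) :
    (A - μ • B) (-(d μ)⁻¹ • ∑ l ∈ J, (d l / (l - μ)) • u l) = B (u μ) := by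
  classical
  have hsum : ∑ l ∈ J, (d l / (l - μ) * (l - μ)) • B (u l) = -(d μ • B (u μ)) := by
    rw [← Finset.add_sum_erase J _ hμ, sub_self, mul_zero, zero_smul, zero_add,
      eq_neg_iff_add_eq_zero, add_comm, ← hC.sum_eq_zero, ← Finset.add_sum_erase J _ hμ]
    congr 1
    refine Finset.sum_congr rfl fun l hl ↦ ?_
    rw [div_mul_cancel₀ _ (sub_ne_zero.mpr (Finset.ne_of_mem_erase hl))]
  rw [map_smul, sub_smul_apply_sum hC.apply_eq, hsum, neg_smul, smul_neg, neg_neg,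
    inv_smul_smul₀ (hC.coeff_ne_zero μ hμ)]

lemma exists_dual_apply_sum (hC : EigenCircuit A B U J u d) :
    ∃ l₀ ∈ J, ∃ h : Dual K V, h (u l₀) ≠ 0 ∧
      ∀ c : K → K, h (∑ l ∈ J, c l • u l) = c l₀ * h (u l₀) := by
  obtain ⟨l₀, hl₀⟩ := hC.nonempty
  obtain ⟨h, hne, hle⟩ := Submodule.exists_le_ker_of_notMem (hC.linearIndepOn.notMem_span hl₀)
  refine ⟨l₀, hl₀, h, hne, fun c ↦ ?_⟩
  rw [map_sum, Finset.sum_eq_single_of_mem l₀ hl₀, map_smul, smul_eq_mul]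
  intro l hl hne
  have : h (u l) = 0 := hle (Submodule.subset_span ⟨l, ⟨hl, hne⟩, rfl⟩)
  rw [map_smul, this, smul_zero]

/-- With `s μ = ∑ l ∈ J, (d l / (l - μ)) • u l` and `h` nonzero on `s μ` for all `μ ≠ l₀`: either
`s μ` starts a Jordan chain, or `μ ∈ J` and `s μ` is, up to a scalar, the second vector of a chain
starting at `u μ`. -/
lemma finrank_jordanKer_inf_ker_lt [FiniteDimensional K V] (hC : EigenCircuit A B U J u d)
    {l₀ : K} (hl₀ : l₀ ∈ J) {h : Dual K V} (hne : h (u l₀) ≠ 0)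
    (hh : ∀ c : K → K, h (∑ l ∈ J, c l • u l) = c l₀ * h (u l₀)) {f : ℕ}
    (hker : ∀ μ ∈ J, finrank K ↥(LinearMap.ker (A - μ • B) ⊓ U) ≤ f)
    (hjordan : ∀ μ : K, finrank K (jordanKer (A - μ • B) B U) ≤ f) (μ : K) :
    finrank K (jordanKer (A - μ • B) B (U ⊓ LinearMap.ker h)) < f := by
  have hhs (hμ : μ ≠ l₀) : h (∑ l ∈ J, (d l / (l - μ)) • u l) ≠ 0 := by
    rw [hh]
    exact mul_ne_zero (div_ne_zero (hC.coeff_ne_zero _ hl₀) (sub_ne_zero.mpr hμ.symm)) hne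
  by_cases hμJ : μ ∈ J
  · have hu : u μ ∈ LinearMap.ker (A - μ • B) ⊓ U :=
      ⟨by simp [hC.apply_eq μ hμJ], hC.mem μ hμJ⟩
    have hy : -(d μ)⁻¹ • ∑ l ∈ J, (d l / (l - μ)) • u l ∈ U := U.smul_mem _ (hC.sum_mem _)
    have hAy := hC.sub_smul_apply_sum_of_mem hμJ
    by_cases hμ : μ = l₀
    · exact (_root_.finrank_jordanKer_inf_ker_lt ⟨hu, _, hy, hAy⟩ (hμ ▸ hne)).trans_le (hjordan μ)
    · refine (finrank_jordanKer_inf_ker_lt_finrank_ker_inf hu hy hAy ?_).trans_le (hker μ hμJ)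
      rw [map_smul, smul_eq_mul]
      exact mul_ne_zero (neg_ne_zero.mpr (inv_ne_zero (hC.coeff_ne_zero μ hμJ))) (hhs hμ)
  · exact (_root_.finrank_jordanKer_inf_ker_lt (hC.sum_mem_jordanKer hμJ)
      (hhs fun hμ ↦ hμJ (hμ ▸ hl₀))).trans_le (hjordan μ)

end EigenCircuit

end KernelDimension

section KerBound

variable {K V W : Type*} [Field K] [AddCommGroup V] [Module K V] [AddCommGroup W] [Module K W]

/-- On `U` the kernel of `B` has the least dimension in the pencil `A - μ B`, and `f` bounds both
this dimension and that of every space of starts of Jordan chains. -/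
structure KerBound (A B : V →ₗ[K] W) (U : Submodule K V) (f : ℕ) : Prop where
  finrank_ker_le_finrank_ker : ∀ μ : K,
    finrank K ↥(LinearMap.ker B ⊓ U) ≤ finrank K ↥(LinearMap.ker (A - μ • B) ⊓ U)
  finrank_ker_le : finrank K ↥(LinearMap.ker B ⊓ U) ≤ f
  finrank_jordanKer_le : ∀ μ : K, finrank K (jordanKer (A - μ • B) B U) ≤ f

namespace KerBound

variable [FiniteDimensional K V] {A B : V →ₗ[K] W} {U : Submodule K V} {f : ℕ} {h : Dual K V}

lemma finrank_ker_le_finrank_ker_inf_ker (hb : KerBound A B U f)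
    (hh : LinearMap.ker B ⊓ U = ⊥ ∨ ∃ z ∈ LinearMap.ker B ⊓ U, h z ≠ 0) (μ : K) :
    finrank K ↥(LinearMap.ker B ⊓ (U ⊓ LinearMap.ker h)) ≤
      finrank K ↥(LinearMap.ker (A - μ • B) ⊓ (U ⊓ LinearMap.ker h)) := by
  rw [← inf_assoc, ← inf_assoc]
  obtain hbot | ⟨z, hz, hhz⟩ := hh
  · rw [hbot, bot_inf_eq, finrank_bot]
    exact Nat.zero_le _
  · have hlt := finrank_inf_ker_lt hz hhz
    have hle := finrank_le_finrank_inf_ker_add_one (LinearMap.ker (A - μ • B) ⊓ U) h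
    have := hb.finrank_ker_le_finrank_ker μ
    lia

variable [Infinite K]

/-- Here every member of the pencil is singular on `U`, and a circuit of eigenvectors gives a
vector of `ker B` whose removal shrinks all kernels at once. -/
lemma exists_reduction_of_finrank_ker_eq [FiniteDimensional K W] (hb : KerBound A B U (f + 1))
    (hf : finrank K ↥(LinearMap.ker B ⊓ U) = f + 1) :
    ∃ (h : Dual K V) (x : V) (z : W) (a b : K), x ∈ U ∧ h x ≠ 0 ∧ A x = a • z ∧ B x = b • z ∧
      KerBound A B (U ⊓ LinearMap.ker h) f := by
  have hker (μ : K) : LinearMap.ker (A - μ • B) ⊓ U ≠ ⊥ := fun hbot ↦ by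
    have := hb.finrank_ker_le_finrank_ker μ
    rw [hbot, hf, finrank_bot] at this
    lia
  obtain ⟨J, u, d, hC, hJ⟩ := exists_eigenCircuit (finite_setOf_finrank_ker_inf_lt A B U) hker
  obtain ⟨l₀, hl₀, h, hne, hh⟩ := hC.exists_dual_apply_sum
  set x := ∑ l ∈ J, d l • u l with hx
  have hxB : x ∈ LinearMap.ker B ⊓ U := ⟨by simp [hx, ← hC.sum_eq_zero], hC.sum_mem d⟩
  have hhx : h x ≠ 0 := by
    rw [hx, hh]
    exact mul_ne_zero (hC.coeff_ne_zero _ hl₀) hne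
  refine ⟨h, x, A x, 1, 0, hxB.2, hhx, (one_smul K _).symm, by simpa using hxB.1,
    hb.finrank_ker_le_finrank_ker_inf_ker (.inr ⟨x, hxB, hhx⟩), ?_, fun μ ↦ ?_⟩
  · have := finrank_inf_ker_lt hxB hhx
    rw [inf_assoc] at this
    lia
  · exact Nat.lt_succ_iff.mp <| hC.finrank_jordanKer_inf_ker_lt hl₀ hne hh
      (fun μ hμ ↦ (not_lt.mp (hJ μ hμ)).trans hb.finrank_ker_le) hb.finrank_jordanKer_le μ

/-- Here only finitely many `μ` attain the bound, and a generic functional `h` is nonzero on a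
Jordan chain start for each of them. -/
lemma exists_reduction_of_finrank_ker_le (hb : KerBound A B U (f + 1))
    (hf : finrank K ↥(LinearMap.ker B ⊓ U) ≤ f) :
    KerBound A B U f ∨
    ∃ (h : Dual K V) (x : V) (z : W) (a b : K), x ∈ U ∧ h x ≠ 0 ∧ A x = a • z ∧ B x = b • z ∧
      KerBound A B (U ⊓ LinearMap.ker h) f := by
  set E : Set K := {μ | f < finrank K (jordanKer (A - μ • B) B U)}
  have hfin : E.Finite := (finite_setOf_finrank_ker_inf_lt A B U).subset fun μ hμ ↦
    (hf.trans_lt hμ).trans_le (Submodule.finrank_mono (jordanKer_le _ _ _))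
  have hk (μ : E) : ∃ k ∈ jordanKer (A - μ.1 • B) B U, k ≠ 0 :=
    Submodule.exists_mem_ne_zero_of_ne_bot fun hbot ↦ by
      have hμ : f < finrank K (jordanKer (A - μ.1 • B) B U) := μ.2
      rw [hbot, finrank_bot] at hμ
      lia
  choose k hk hk0 using hk
  obtain hempty | ⟨μ₀, hμ₀⟩ := E.eq_empty_or_nonempty
  · exact .inl ⟨hb.finrank_ker_le_finrank_ker, hf, fun μ ↦
      not_lt.mp (Set.eq_empty_iff_forall_notMem.mp hempty μ)⟩
  obtain ⟨z, hz0, hz⟩ : ∃ z ≠ 0, LinearMap.ker B ⊓ U = ⊥ ∨ z ∈ LinearMap.ker B ⊓ U := by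
    obtain hbot | hbot := eq_or_ne (LinearMap.ker B ⊓ U) ⊥
    · exact ⟨k ⟨μ₀, hμ₀⟩, hk0 _, .inl hbot⟩
    · obtain ⟨z, hz, hz0⟩ := Submodule.exists_mem_ne_zero_of_ne_bot hbot
      exact ⟨z, hz0, .inr hz⟩
  have := hfin.to_subtype
  obtain ⟨h, hh⟩ := Module.exists_dual_forall_apply_ne_zero (K := K) (Option.elim · z k)
    (Option.rec hz0 hk0)
  refine .inr ⟨h, k ⟨μ₀, hμ₀⟩, B (k ⟨μ₀, hμ₀⟩), μ₀, 1, (hk _).1.2, hh (some _),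
    by simpa [sub_eq_zero] using (hk ⟨μ₀, hμ₀⟩).1.1, (one_smul K _).symm,
    hb.finrank_ker_le_finrank_ker_inf_ker (hz.imp_right fun hz ↦ ⟨z, hz, hh none⟩),
    (Submodule.finrank_mono (inf_le_inf_left _ inf_le_left)).trans hf, fun μ ↦ ?_⟩
  by_cases hμ : μ ∈ E
  · have hlt := finrank_jordanKer_inf_ker_lt (hk ⟨μ, hμ⟩) (hh (some ⟨μ, hμ⟩))
    have hle := hb.finrank_jordanKer_le μ
    lia
  · exact (Submodule.finrank_mono (jordanKer_mono inf_le_left)).trans (not_lt.mp hμ)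

lemma exists_reduction [FiniteDimensional K W] (hb : KerBound A B U (f + 1)) :
    KerBound A B U f ∨
    ∃ (h : Dual K V) (x : V) (z : W) (a b : K), x ∈ U ∧ h x ≠ 0 ∧ A x = a • z ∧ B x = b • z ∧
      KerBound A B (U ⊓ LinearMap.ker h) f :=
  hb.finrank_ker_le.eq_or_lt.elim (fun hf ↦ .inr (hb.exists_reduction_of_finrank_ker_eq hf))
    fun hf ↦ hb.exists_reduction_of_finrank_ker_le (Nat.lt_succ_iff.mp hf)

lemma exists_submodule [FiniteDimensional K W] (hb : KerBound A B U f) :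
    ∃ U' : Submodule K V, KerBound A B U' 0 ∧ finrank K U ≤ finrank K U' + f ∧
      ∀ R, PencilRankLE (A.domRestrict U') (B.domRestrict U') R →
        PencilRankLE (A.domRestrict U) (B.domRestrict U) (R + f) := by
  induction f generalizing U with
  | zero => exact ⟨U, hb, le_rfl, fun R ↦ id⟩
  | succ f ih =>
    obtain hb' | ⟨h, x, z, a, b, hx, hhx, hA, hB, hb'⟩ := hb.exists_reduction
    · obtain ⟨U', hU', hdim, hrank⟩ := ih hb'
      exact ⟨U', hU', by lia, fun R hR ↦ (hrank R hR).mono (by lia)⟩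
    · obtain ⟨U', hU', hdim, hrank⟩ := ih hb'
      have := finrank_le_finrank_inf_ker_add_one U h
      exact ⟨U', hU', by lia, fun R hR ↦ (hrank R hR).domRestrict_of_inf_ker hx hhx hA hB⟩

end KerBound

end KerBound

section DiagonalizablePencil

variable {K V W : Type*} [Field K] [AddCommGroup V] [Module K V] [AddCommGroup W] [Module K W]
variable {A B : V →ₗ[K] W}

lemma PencilRankLE.of_basis {ι : Type*} [Fintype ι] (e : Basis ι K V) {α β : ι → K} {w : ι → W}
    (hA : ∀ i, A (e i) = α i • w i) (hB : ∀ i, B (e i) = β i • w i) :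
    PencilRankLE A B (Fintype.card ι) := by
  classical
  let σ := (Fintype.equivFin ι).symm
  have expand (C : V →ₗ[K] W) (γ : ι → K) (hC : ∀ i, C (e i) = γ i • w i) :
      C = ∑ j, γ (σ j) • (e.coord (σ j)).smulRight (w (σ j)) := by
    rw [σ.sum_comp fun i ↦ γ i • (e.coord i).smulRight (w i)]
    exact e.ext fun i ↦ by simp [hC, Finsupp.single_apply]
  exact ⟨α ∘ σ, β ∘ σ, fun j ↦ e.coord (σ j), w ∘ σ, expand A α hA, expand B β hB⟩

lemma ker_pow_le_ker_of_disjoint {N : End K V}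
    (hN : Disjoint (LinearMap.ker N) (LinearMap.range N)) (k : ℕ) :
    LinearMap.ker (N ^ k) ≤ LinearMap.ker N := by
  induction k with
  | zero => simp [Module.End.one_eq_id]
  | succ k ih =>
    intro x hx
    rw [LinearMap.mem_ker, pow_succ, Module.End.mul_apply] at hx
    exact Submodule.disjoint_def.mp hN (N x) (ih hx) ⟨x, rfl⟩

lemma iSup_eigenspace_eq_top_of_disjoint [IsAlgClosed K] [FiniteDimensional K V] {T : End K V}
    (hT : ∀ μ : K, Disjoint (LinearMap.ker (T - μ • 1)) (LinearMap.range (T - μ • 1))) :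
    ⨆ μ, T.eigenspace μ = ⊤ := by
  refine eq_top_iff.mpr <| T.iSup_maxGenEigenspace_eq_top.ge.trans <| iSup_mono fun μ x hx ↦ ?_
  obtain ⟨k, hk⟩ := (T.mem_maxGenEigenspace μ x).mp hx
  simpa [Module.End.mem_eigenspace_iff, sub_eq_zero] using ker_pow_le_ker_of_disjoint (hT μ) k hk

lemma PencilRankLE.of_bijective [IsAlgClosed K] [FiniteDimensional K V]
    (hB : Function.Bijective B) (h : ∀ μ : K, jordanKer (A - μ • B) B ⊤ = ⊥) :
    PencilRankLE A B (finrank K V) := by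
  let e := LinearEquiv.ofBijective B hB
  let T : End K V := e.symm ∘ₗ A
  have hT (x : V) : B (T x) = A x := e.apply_symm_apply (A x)
  have hBN (μ : K) (x : V) : B ((T - μ • 1 : End K V) x) = (A - μ • B) x := by simp [hT]
  have htop : ⨆ μ, T.eigenspace μ = ⊤ := iSup_eigenspace_eq_top_of_disjoint fun μ ↦ by
    refine Submodule.disjoint_def.mpr fun x hx ⟨y, hyx⟩ ↦ ?_
    suffices x ∈ jordanKer (A - μ • B) B ⊤ by simpa [h] using this
    refine ⟨⟨?_, trivial⟩, y, trivial, by rw [← hBN, hyx]⟩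
    rw [SetLike.mem_coe, LinearMap.mem_ker, ← hBN, LinearMap.mem_ker.mp hx, map_zero]
  have hspan : ⊤ ≤ Submodule.span K {x : V | ∃ μ : K, T x = μ • x} := by
    rw [← htop]
    exact iSup_le fun μ x hx ↦
      Submodule.subset_span ⟨μ, Module.End.mem_eigenspace_iff.mp hx⟩
  let b := Basis.ofSpan hspan
  choose μ hμ using fun i ↦ Basis.ofSpan_subset hspan ⟨i, rfl⟩
  have := FiniteDimensional.fintypeBasisIndex b
  rw [finrank_eq_card_basis b]
  exact of_basis b (β := 1) (w := B ∘ b) (fun i ↦ by rw [← hT, hμ, map_smul]; rfl)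
    (fun i ↦ (one_smul K _).symm)

lemma finrank_jordanKer_dualMap_add [FiniteDimensional K V] [FiniteDimensional K W]
    (hB : Function.Injective B) (h : jordanKer A B ⊤ = ⊥) :
    finrank K (jordanKer A.dualMap B.dualMap ⊤) + finrank K V = finrank K W := by
  have hdisj : LinearMap.range A ⊓ (LinearMap.ker A).map B = ⊥ := by
    refine (Submodule.eq_bot_iff _).mpr ?_
    rintro _ ⟨⟨y, hy⟩, k, hk, rfl⟩
    have : k ∈ jordanKer A B ⊤ := ⟨⟨hk, trivial⟩, y, trivial, hy⟩
    rw [h, Submodule.mem_bot] at this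
    rw [this, map_zero]
  have hdual : jordanKer A.dualMap B.dualMap ⊤ =
      (LinearMap.range A ⊔ (LinearMap.ker A).map B).dualAnnihilator := by
    rw [jordanKer, inf_top_eq, Submodule.map_top, LinearMap.range_dualMap_eq_dualAnnihilator_ker,
      LinearMap.ker_dualMap_eq_dualAnnihilator_range, Submodule.dualAnnihilator_sup_eq]
    congr 1
    ext ψ
    simp [Submodule.mem_dualAnnihilator]
  have hsup := Submodule.finrank_sup_add_finrank_inf_eq (LinearMap.range A)
    ((LinearMap.ker A).map B)
  have hmap := finrank_map_add_finrank_ker_inf B (LinearMap.ker A)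
  rw [LinearMap.ker_eq_bot.mpr hB, bot_inf_eq, finrank_bot] at hmap
  rw [hdisj, finrank_bot] at hsup
  have := LinearMap.finrank_range_add_finrank_ker A
  have := Subspace.finrank_add_finrank_dualAnnihilator_eq
    (LinearMap.range A ⊔ (LinearMap.ker A).map B)
  rw [hdual]
  lia

end DiagonalizablePencil

section UpperBound

variable {K V W : Type*} [Field K] [AddCommGroup V] [Module K V] [AddCommGroup W] [Module K W]
variable {A B : V →ₗ[K] W} {U : Submodule K V} {R f : ℕ}

lemma map_subtype_jordanKer_domRestrict (A B : V →ₗ[K] W) (U : Submodule K V) :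
    (jordanKer (A.domRestrict U) (B.domRestrict U) ⊤).map U.subtype = jordanKer A B U := by
  have hmap : (⊤ : Submodule K U).map (A.domRestrict U) = U.map A := by
    rw [Submodule.map_top, LinearMap.range_domRestrict]
  have hcomap : jordanKer (A.domRestrict U) (B.domRestrict U) ⊤ =
      (LinearMap.ker A ⊓ (U.map A).comap B).comap U.subtype := by
    rw [jordanKer, hmap, inf_top_eq, LinearMap.ker_domRestrict]
    rfl
  rw [hcomap, Submodule.map_comap_subtype, jordanKer, inf_comm _ U, inf_assoc]

lemma PencilRankLE.of_domRestrict_top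
    (h : PencilRankLE (A.domRestrict ⊤) (B.domRestrict ⊤) R) : PencilRankLE A B R :=
  h.comp LinearMap.id Submodule.topEquiv.symm.toLinearMap

namespace KerBound

variable [FiniteDimensional K V]

lemma injective_domRestrict (hb : KerBound A B U 0) : Function.Injective (B.domRestrict U) :=
  LinearMap.injective_domRestrict_iff.mpr <| disjoint_iff.mpr <| by
    rw [inf_comm]
    exact Submodule.finrank_eq_zero.mp (Nat.le_zero.mp hb.finrank_ker_le)

lemma jordanKer_domRestrict_eq_bot (hb : KerBound A B U 0) (μ : K) :
    jordanKer (A.domRestrict U - μ • B.domRestrict U) (B.domRestrict U) ⊤ = ⊥ := by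
  rw [← Submodule.finrank_eq_zero, ← Submodule.finrank_map_subtype_eq]
  exact Nat.le_zero.mp ((map_subtype_jordanKer_domRestrict (A - μ • B) B U).symm ▸
    hb.finrank_jordanKer_le μ)

variable [FiniteDimensional K W]

lemma dualMap (hB : Function.Injective B) (h : ∀ μ : K, jordanKer (A - μ • B) B ⊤ = ⊥) :
    KerBound A.dualMap B.dualMap ⊤ (finrank K W - finrank K V) := by
  have hker (C : V →ₗ[K] W) : finrank K W ≤ finrank K (LinearMap.ker C.dualMap) + finrank K V := by
    have hsum := LinearMap.finrank_range_add_finrank_ker C.dualMap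
    have hle := (LinearMap.range C.dualMap).finrank_le
    rw [Subspace.dual_finrank_eq] at hsum hle
    lia
  have hkerB : finrank K (LinearMap.ker B.dualMap) = finrank K W - finrank K V := by
    have hsum := LinearMap.finrank_range_add_finrank_ker B.dualMap
    rw [LinearMap.range_eq_top.mpr (LinearMap.dualMap_surjective_of_injective hB), finrank_top,
      Subspace.dual_finrank_eq, Subspace.dual_finrank_eq] at hsum
    lia
  have hdual (μ : K) : A.dualMap - μ • B.dualMap = (A - μ • B).dualMap := by
    ext; simp
  refine ⟨fun μ ↦ ?_, by rw [inf_top_eq, hkerB], fun μ ↦ ?_⟩ <;> rw [hdual]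
  · rw [inf_top_eq, inf_top_eq, hkerB]
    have := hker (A - μ • B)
    lia
  · have := finrank_jordanKer_dualMap_add hB (h μ)
    lia

end KerBound

variable [IsAlgClosed K] [FiniteDimensional K V] [FiniteDimensional K W]

lemma KerBound.pencilRankLE_of_finrank_eq (hb : KerBound A B ⊤ f)
    (hVW : finrank K V = finrank K W + f) : PencilRankLE A B (finrank K V) := by
  obtain ⟨U, hU, hdim, hrank⟩ := hb.exists_submodule
  have hle := LinearMap.finrank_le_finrank_of_injective hU.injective_domRestrict
  rw [finrank_top] at hdim
  have hUW : finrank K U = finrank K W := by lia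
  have hbij : Function.Bijective (B.domRestrict U) :=
    ⟨hU.injective_domRestrict,
      (LinearMap.injective_iff_surjective_of_finrank_eq_finrank hUW).mp hU.injective_domRestrict⟩
  rw [hVW, ← hUW]
  exact .of_domRestrict_top (hrank _ (.of_bijective hbij hU.jordanKer_domRestrict_eq_bot))

lemma PencilRankLE.of_injective (hB : Function.Injective B)
    (h : ∀ μ : K, jordanKer (A - μ • B) B ⊤ = ⊥) : PencilRankLE A B (finrank K W) := by
  have hVW := LinearMap.finrank_le_finrank_of_injective hB
  have hrank := (KerBound.dualMap hB h).pencilRankLE_of_finrank_eq <| by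
    rw [Subspace.dual_finrank_eq, Subspace.dual_finrank_eq]
    lia
  rw [Subspace.dual_finrank_eq] at hrank
  exact hrank.of_dualMap

lemma KerBound.pencilRankLE (hb : KerBound A B ⊤ f) : PencilRankLE A B (finrank K W + f) := by
  obtain ⟨U, hU, -, hrank⟩ := hb.exists_submodule
  exact .of_domRestrict_top
    (hrank _ (.of_injective hU.injective_domRestrict hU.jordanKer_domRestrict_eq_bot))

end UpperBound

/-! ### The lower bound -/

section LowerBound

variable {K V W : Type*} [Field K] [AddCommGroup V] [Module K V] [AddCommGroup W] [Module K W]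
variable {A B : V →ₗ[K] W} {R : ℕ}

/-- The pencil `A, B`, seen as a tensor in `K² ⊗ W ⊗ V*`, is concise in the last two factors. -/
structure IsConcise (A B : V →ₗ[K] W) : Prop where
  ker_inf_ker : LinearMap.ker A ⊓ LinearMap.ker B = ⊥
  range_sup_range : LinearMap.range A ⊔ LinearMap.range B = ⊤

namespace IsConcise

lemma symm (hc : IsConcise A B) : IsConcise B A :=
  ⟨inf_comm (LinearMap.ker A) _ ▸ hc.ker_inf_ker,
    sup_comm (LinearMap.range A) _ ▸ hc.range_sup_range⟩

lemma sub_smul (hc : IsConcise A B) (μ : K) : IsConcise (A - μ • B) B := by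
  refine ⟨(Submodule.eq_bot_iff _).mpr fun x ⟨hA, hB⟩ ↦ ?_, eq_top_iff.mpr ?_⟩
  · have hBx : B x = 0 := hB
    exact (Submodule.eq_bot_iff _).mp hc.ker_inf_ker x ⟨by simpa [hBx] using hA, hB⟩
  · rw [← hc.range_sup_range]
    refine sup_le ?_ le_sup_right
    rintro _ ⟨x, rfl⟩
    exact Submodule.mem_sup.mpr ⟨_, ⟨x, rfl⟩, _, ⟨μ • x, rfl⟩, by simp⟩

end IsConcise

lemma PencilRankLE.exists_eq_comp (h : PencilRankLE A B R) :
    ∃ (a b : Fin R → K) (Φ : V →ₗ[K] Fin R → K) (g : (Fin R → K) →ₗ[K] W),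
      A = g ∘ₗ LinearMap.mulLeft K a ∘ₗ Φ ∧ B = g ∘ₗ LinearMap.mulLeft K b ∘ₗ Φ := by
  obtain ⟨a, b, φ, w, rfl, rfl⟩ := h
  refine ⟨a, b, LinearMap.pi φ, Fintype.linearCombination K w, ?_, ?_⟩ <;> ext x <;>
    simp [Fintype.linearCombination_apply, mul_smul]

section

variable {E : Type*} [AddCommGroup E] [Module K E] {g : E →ₗ[K] W} {δ ε : V →ₗ[K] E}

lemma IsConcise.ker_inf_ker_of_comp (hc : IsConcise (g ∘ₗ δ) (g ∘ₗ ε)) :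
    LinearMap.ker δ ⊓ LinearMap.ker ε = ⊥ :=
  eq_bot_iff.mpr <| (inf_le_inf (LinearMap.ker_le_ker_comp δ g)
    (LinearMap.ker_le_ker_comp ε g)).trans hc.ker_inf_ker.le

variable [FiniteDimensional K E]

lemma finrank_ker_comp_le_of_ker_eq_bot [FiniteDimensional K V] (hδ : LinearMap.ker δ = ⊥) :
    finrank K (LinearMap.ker (g ∘ₗ δ)) ≤ finrank K (LinearMap.ker g) := by
  have hinj := finrank_map_add_finrank_ker_inf δ (LinearMap.ker (g ∘ₗ δ))
  rw [hδ, bot_inf_eq, finrank_bot, add_zero] at hinj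
  rw [← hinj]
  exact Submodule.finrank_mono (Submodule.map_le_iff_le_comap.mpr le_rfl)

lemma IsConcise.finrank_add_finrank_ker (hc : IsConcise (g ∘ₗ δ) (g ∘ₗ ε)) :
    finrank K W + finrank K (LinearMap.ker g) = finrank K E := by
  rw [← LinearMap.finrank_range_add_finrank_ker g, eq_top_iff.mpr <| hc.range_sup_range.ge.trans <|
    sup_le (LinearMap.range_comp_le_range δ g) (LinearMap.range_comp_le_range ε g), finrank_top]

/-- `δ` maps the chain starts into `ker g ⊓ ker P`. For a chain start `x ∈ ker δ` with
`g (ε x) = g (δ y)`, the difference `ε x - δ y` lies in `ker g`, and `P` recovers `ε x` from it. -/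
lemma finrank_jordanKer_comp_le [FiniteDimensional K V] {P : End K E}
    (hdisj : LinearMap.ker δ ⊓ LinearMap.ker ε = ⊥) (hPδ : ∀ x, P (δ x) = 0)
    (hPε : ∀ x, δ x = 0 → P (ε x) = ε x) (U : Submodule K V) :
    finrank K (jordanKer (g ∘ₗ δ) (g ∘ₗ ε) U) ≤ finrank K (LinearMap.ker g) := by
  set J := jordanKer (g ∘ₗ δ) (g ∘ₗ ε) U
  have hδ : J.map δ ≤ LinearMap.ker P ⊓ LinearMap.ker g := by
    rintro _ ⟨x, hx, rfl⟩
    exact ⟨hPδ x, hx.1.1⟩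
  have hε : (LinearMap.ker δ ⊓ J).map ε ≤ (LinearMap.ker g).map P := by
    rintro _ ⟨x, ⟨hx, -, y, -, hy⟩, rfl⟩
    refine ⟨ε x - δ y, ?_, by rw [map_sub, hPδ, sub_zero, hPε x hx]⟩
    rw [SetLike.mem_coe, LinearMap.mem_ker, map_sub, sub_eq_zero]
    exact hy.symm
  have hinj := finrank_map_add_finrank_ker_inf ε (LinearMap.ker δ ⊓ J)
  rw [← inf_assoc, inf_comm (LinearMap.ker ε), hdisj, bot_inf_eq, finrank_bot, add_zero] at hinj
  calc finrank K J
      = finrank K (J.map δ) + finrank K ((LinearMap.ker δ ⊓ J).map ε) := by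
        rw [hinj, finrank_map_add_finrank_ker_inf]
    _ ≤ finrank K ↥(LinearMap.ker P ⊓ LinearMap.ker g) + finrank K ((LinearMap.ker g).map P) :=
        add_le_add (Submodule.finrank_mono hδ) (Submodule.finrank_mono hε)
    _ = finrank K (LinearMap.ker g) := by rw [add_comm, finrank_map_add_finrank_ker_inf]

end

section

variable [FiniteDimensional K V]

lemma IsConcise.finrank_add_finrank_jordanKer_le (hc : IsConcise A B) (h : PencilRankLE A B R) :
    finrank K W + finrank K (jordanKer A B ⊤) ≤ R := by
  classical
  obtain ⟨a, b, Φ, g, rfl, rfl⟩ := h.exists_eq_comp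
  have hg := hc.finrank_add_finrank_ker
  rw [finrank_fin_fun] at hg
  let P : End K (Fin R → K) := LinearMap.mulLeft K fun i ↦ if a i = 0 then 1 else 0
  refine (Nat.add_le_add_left (finrank_jordanKer_comp_le (P := P) hc.ker_inf_ker_of_comp
    (fun x ↦ ?_) (fun x hx ↦ ?_) ⊤) _).trans hg.le <;> ext i
  · simp +contextual [P]
  · have hi : a i = 0 ∨ Φ x i = 0 := by simpa using congrFun hx i
    obtain hi | hi := hi <;> simp [P, hi]

lemma IsConcise.exists_finrank_add_finrank_ker_le [Infinite K] (hc : IsConcise A B)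
    (h : PencilRankLE A B R) :
    ∃ μ : K, finrank K W + finrank K (LinearMap.ker (A - μ • B)) ≤ R := by
  obtain ⟨a, b, Φ, g, rfl, rfl⟩ := h.exists_eq_comp
  obtain ⟨μ, hμ⟩ := (Set.finite_range fun i ↦ a i / b i).infinite_compl.nonempty
  have hab (i) (hi : a i - μ * b i = 0) : a i = 0 ∧ b i = 0 := by
    have hb : b i = 0 := by_contra fun hb ↦ hμ ⟨i, by field_simp; linear_combination hi⟩
    exact ⟨by simpa [hb] using hi, hb⟩
  let δ := LinearMap.mulLeft K (a - μ • b) ∘ₗ Φ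
  have hδ : LinearMap.ker δ = ⊥ := by
    rw [eq_bot_iff, ← hc.ker_inf_ker_of_comp]
    intro x hx
    have hx (i) : a i * Φ x i = 0 ∧ b i * Φ x i = 0 := by
      obtain hi | hi : a i - μ * b i = 0 ∨ Φ x i = 0 := by simpa [δ] using congrFun hx i
      · simp [hab i hi]
      · simp [hi]
    exact ⟨funext fun i ↦ (hx i).1, funext fun i ↦ (hx i).2⟩
  have hcomp : g ∘ₗ LinearMap.mulLeft K a ∘ₗ Φ - μ • g ∘ₗ LinearMap.mulLeft K b ∘ₗ Φ = g ∘ₗ δ := by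
    ext x
    simp [δ, sub_mul]
  have hg := hc.finrank_add_finrank_ker
  rw [finrank_fin_fun] at hg
  refine ⟨μ, (Nat.add_le_add_left ?_ _).trans hg.le⟩
  rw [hcomp]
  exact finrank_ker_comp_le_of_ker_eq_bot hδ

end

section CompLeft

variable {ι : Type*}

lemma compLeft_sub_smul (A B : V →ₗ[K] W) (μ : K) :
    (A - μ • B).compLeft ι = A.compLeft ι - μ • B.compLeft ι := by
  ext
  simp

lemma jordanKer_compLeft (A B : V →ₗ[K] W) :
    jordanKer (A.compLeft ι) (B.compLeft ι) ⊤ =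
      Submodule.pi Set.univ fun _ ↦ jordanKer A B ⊤ := by
  ext x
  simp [jordanKer, funext_iff, forall_and, Classical.skolem]

lemma IsConcise.compLeft (hc : IsConcise A B) : IsConcise (A.compLeft ι) (B.compLeft ι) := by
  refine ⟨(Submodule.eq_bot_iff _).mpr fun x ⟨hA, hB⟩ ↦ funext fun i ↦ ?_, eq_top_iff.mpr ?_⟩
  · exact (Submodule.eq_bot_iff _).mp hc.ker_inf_ker (x i) ⟨congrFun hA i, congrFun hB i⟩
  · intro w _
    have hw (i) : ∃ x y, A x + B y = w i := by
      have : w i ∈ LinearMap.range A ⊔ LinearMap.range B := hc.range_sup_range ▸ trivial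
      simpa [Submodule.mem_sup] using this
    choose x y hxy using hw
    exact Submodule.mem_sup.mpr ⟨_, ⟨x, rfl⟩, _, ⟨y, rfl⟩, funext hxy⟩

variable [Fintype ι] [FiniteDimensional K V]

lemma finrank_pi_univ_const (S : Submodule K V) :
    finrank K (Submodule.pi Set.univ fun _ : ι ↦ S) = Fintype.card ι * finrank K S := by
  have hS := LinearMap.range_compLeft S.subtype ι
  rw [Submodule.range_subtype] at hS
  rw [← hS, LinearMap.finrank_range_of_inj, Module.finrank_pi_fintype]
  · simp
  · exact fun x y hxy ↦ funext fun i ↦ Subtype.ext (congrFun hxy i)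

end CompLeft

end LowerBound

section Copies

variable {K V W : Type*} [Field K] [AddCommGroup V] [Module K V] [AddCommGroup W] [Module K W]

lemma exists_forall_finrank_ker_sub_smul_le [Infinite K] [FiniteDimensional K V] (A B : V →ₗ[K] W) :
    ∃ ν : K, ∀ μ : K, finrank K (LinearMap.ker (A - ν • B)) ≤
      finrank K (LinearMap.ker (B - μ • (A - ν • B))) := by
  let n (μ : K) := finrank K (LinearMap.ker (A - μ • B))
  refine ⟨Function.argmin n, fun μ ↦ ?_⟩
  set ν := Function.argmin n
  obtain rfl | hμ := eq_or_ne μ 0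
  · obtain ⟨μ, hμ⟩ := (finite_setOf_finrank_ker_lt A B).infinite_compl.nonempty
    rw [zero_smul, sub_zero]
    exact (Function.argmin_le n μ).trans (not_lt.mp hμ)
  · have heq : B - μ • (A - ν • B) = -μ • (A - (ν + μ⁻¹) • B) := by
      match_scalars <;> field_simp
      ring
    rw [heq, LinearMap.ker_smul _ _ (neg_ne_zero.mpr hμ)]
    exact Function.argmin_le n _

lemma exists_isConcise (A B : V →ₗ[K] W) :
    ∃ (V' : Submodule K V) (W' : Submodule K W) (p : V →ₗ[K] V') (q : W →ₗ[K] W'),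
      IsConcise (q ∘ₗ A ∘ₗ V'.subtype) (q ∘ₗ B ∘ₗ V'.subtype) ∧
      W'.subtype ∘ₗ (q ∘ₗ A ∘ₗ V'.subtype) ∘ₗ p = A ∧
      W'.subtype ∘ₗ (q ∘ₗ B ∘ₗ V'.subtype) ∘ₗ p = B := by
  obtain ⟨V', hV'⟩ := Submodule.exists_isCompl (LinearMap.ker A ⊓ LinearMap.ker B)
  set W' := LinearMap.range A ⊔ LinearMap.range B
  obtain ⟨D, hD⟩ := Submodule.exists_isCompl W'
  let p := V'.projectionOnto _ hV'.symm
  let q := W'.projectionOnto D hD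
  have hp (x : V) : A (p x) = A x ∧ B (p x) = B x := by
    have hx : (p x : V) - x ∈ LinearMap.ker A ⊓ LinearMap.ker B := by
      rw [← Submodule.projectionOnto_apply_eq_zero_iff hV'.symm, map_sub,
        Submodule.projectionOnto_apply_left, sub_self]
    simpa [sub_eq_zero] using hx
  have hqA (x : V) : (q (A x) : W) = A x := by
    rw [Submodule.projectionOnto_apply_of_mem_left hD (Submodule.mem_sup_left ⟨x, rfl⟩)]
  have hqB (x : V) : (q (B x) : W) = B x := by
    rw [Submodule.projectionOnto_apply_of_mem_left hD (Submodule.mem_sup_right ⟨x, rfl⟩)]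
  refine ⟨V', W', p, q, ⟨(Submodule.eq_bot_iff _).mpr fun x ⟨hA, hB⟩ ↦ ?_, eq_top_iff.mpr ?_⟩,
    LinearMap.ext fun x ↦ (hqA _).trans (hp x).1, LinearMap.ext fun x ↦ (hqB _).trans (hp x).2⟩
  · refine Subtype.ext (Submodule.disjoint_def.mp hV'.disjoint x ⟨?_, ?_⟩ x.2)
    · exact (hqA x).symm.trans congr(($hA : W))
    · exact (hqB x).symm.trans congr(($hB : W))
  · rintro ⟨w, hw⟩ -
    obtain ⟨_, ⟨x, rfl⟩, _, ⟨y, rfl⟩, rfl⟩ := Submodule.mem_sup.mp hw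
    refine Submodule.mem_sup.mpr ⟨_, ⟨p x, rfl⟩, _, ⟨p y, rfl⟩, Subtype.ext ?_⟩
    simp [hp, hqA, hqB]

variable {A B : V →ₗ[K] W} {R : ℕ} {ι : Type*} [Fintype ι]
variable [FiniteDimensional K V] [FiniteDimensional K W]

lemma IsConcise.card_mul_finrank_ker_le [Infinite K] (hc : IsConcise A B)
    (hmin : ∀ μ : K, finrank K (LinearMap.ker B) ≤ finrank K (LinearMap.ker (A - μ • B)))
    (h : PencilRankLE (A.compLeft ι) (B.compLeft ι) R) :
    Fintype.card ι * (finrank K W + finrank K (LinearMap.ker B)) ≤ R := by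
  obtain ⟨μ, hμ⟩ := hc.compLeft.exists_finrank_add_finrank_ker_le h
  rw [← compLeft_sub_smul, LinearMap.ker_compLeft, finrank_pi_univ_const, finrank_pi_fintype,
    Finset.sum_const, Finset.card_univ, smul_eq_mul, ← mul_add] at hμ
  exact (Nat.mul_le_mul_left _ (Nat.add_le_add_left (hmin μ) _)).trans hμ

lemma IsConcise.card_mul_finrank_jordanKer_le (hc : IsConcise A B)
    (h : PencilRankLE (A.compLeft ι) (B.compLeft ι) R) (μ : K) :
    Fintype.card ι * (finrank K W + finrank K (jordanKer (A - μ • B) B ⊤)) ≤ R := by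
  have hμ := (hc.sub_smul μ).compLeft.finrank_add_finrank_jordanKer_le
    (compLeft_sub_smul (ι := ι) A B μ ▸ h.sub_smul μ)
  rwa [jordanKer_compLeft, finrank_pi_univ_const, finrank_pi_fintype, Finset.sum_const,
    Finset.card_univ, smul_eq_mul, ← mul_add] at hμ

variable [IsAlgClosed K]

lemma IsConcise.exists_pencilRankLE_of_finrank_ker_le (hc : IsConcise A B)
    (hmin : ∀ μ : K, finrank K (LinearMap.ker B) ≤ finrank K (LinearMap.ker (A - μ • B)))
    (h : PencilRankLE (A.compLeft ι) (B.compLeft ι) R) :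
    ∃ F, PencilRankLE A B F ∧ Fintype.card ι * F ≤ R := by
  let k (μ : K) := finrank K (jordanKer (A - μ • B) B ⊤)
  have hk : BddAbove (Set.range k) := ⟨finrank K V, by
    rintro _ ⟨μ, rfl⟩
    exact Submodule.finrank_le _⟩
  obtain ⟨μ₀, hμ₀⟩ := Nat.sSup_mem (Set.range_nonempty k) hk
  have hb : KerBound A B ⊤ (max (finrank K (LinearMap.ker B)) (k μ₀)) := by
    refine ⟨fun μ ↦ ?_, ?_, fun μ ↦ le_max_of_le_right ?_⟩
    · rw [inf_top_eq, inf_top_eq]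
      exact hmin μ
    · rw [inf_top_eq]
      exact le_max_left _ _
    · exact hμ₀ ▸ le_csSup hk ⟨μ, rfl⟩
  refine ⟨_, hb.pencilRankLE, ?_⟩
  obtain hmax | hmax := max_choice (finrank K (LinearMap.ker B)) (k μ₀) <;> rw [hmax]
  · exact hc.card_mul_finrank_ker_le hmin h
  · exact hc.card_mul_finrank_jordanKer_le h μ₀

lemma IsConcise.exists_pencilRankLE (hc : IsConcise A B)
    (h : PencilRankLE (A.compLeft ι) (B.compLeft ι) R) :
    ∃ F, PencilRankLE A B F ∧ Fintype.card ι * F ≤ R := by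
  obtain ⟨ν, hν⟩ := exists_forall_finrank_ker_sub_smul_le A B
  have h' : PencilRankLE (B.compLeft ι) ((A - ν • B).compLeft ι) R :=
    compLeft_sub_smul A B ν ▸ (h.sub_smul ν).symm
  obtain ⟨F, hF, hle⟩ := (hc.sub_smul ν).symm.exists_pencilRankLE_of_finrank_ker_le hν h'
  exact ⟨F, by simpa using hF.symm.sub_smul (-ν), hle⟩

theorem exists_pencilRankLE_of_compLeft (h : PencilRankLE (A.compLeft ι) (B.compLeft ι) R) :
    ∃ F, PencilRankLE A B F ∧ Fintype.card ι * F ≤ R := by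
  obtain ⟨V', W', p, q, hc, hA, hB⟩ := exists_isConcise A B
  obtain ⟨F, hF, hle⟩ :=
    hc.exists_pencilRankLE (h.comp (q.compLeft ι) (V'.subtype.compLeft ι))
  exact ⟨F, by simpa only [hA, hB] using hF.comp W'.subtype p, hle⟩

end Copies

/-! ### Tensors -/

section TensorRank

variable {K ι κ : Type*} [Field K] [Fintype ι] [DecidableEq ι]

section

variable {γ : ι → Type*} [∀ i, Fintype (γ i)] {T : (∀ i, γ i) → K} {R : ℕ}

lemma tRank_le (v : Fin R → ∀ i, γ i → K) (h : ∀ x, T x = ∑ j, ∏ i, v j i (x i)) : tRank T ≤ R :=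
  Nat.sInf_le ⟨v, h⟩

lemma exists_eq_sum_prod [Nonempty ι] (T : (∀ i, γ i) → K) :
    ∃ v : Fin (tRank T) → ∀ i, γ i → K, ∀ x, T x = ∑ j, ∏ i, v j i (x i) := by
  classical
  let e := Fintype.equivFin (∀ i, γ i)
  obtain ⟨i₀⟩ := ‹Nonempty ι›
  refine Nat.sInf_mem (s := {r | ∃ v : Fin r → ∀ i, γ i → K, ∀ x, T x = ∑ j, ∏ i, v j i (x i)})
    ⟨_, fun l i ↦ Pi.single (e.symm l i) (if i = i₀ then T (e.symm l) else 1), fun x ↦ ?_⟩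
  rw [Finset.sum_eq_single (e x)]
  · simp
  · intro l _ hl
    obtain ⟨i, hi⟩ := Function.ne_iff.mp fun h : x = e.symm l ↦ hl (by simp [h])
    exact Finset.prod_eq_zero (Finset.mem_univ i) (Pi.single_eq_of_ne hi _)
  · simp

lemma tRank_tKron_le_tRank_tProd {γ δ : ι → Type u} [Nonempty ι] [∀ i, Fintype (γ i)]
    [∀ i, Fintype (δ i)] (S : (∀ i, γ i) → K) (T : (∀ i, δ i) → K) :
    tRank (tKron S T) ≤ tRank (tProd S T) := by
  obtain ⟨v, hv⟩ := exists_eq_sum_prod (tProd S T)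
  refine tRank_le (fun j i x ↦ v j (.inl i) x.1 * v j (.inr i) x.2) fun x ↦ ?_
  refine (hv (Sum.rec (fun i ↦ (x i).1) fun i ↦ (x i).2)).trans ?_
  simp only [Fintype.prod_sum_type, Finset.prod_mul_distrib]

lemma tRank_tProd_le [Nonempty ι] [Fintype κ] [DecidableEq κ] [Nonempty κ] {γ : ι → Type u}
    {δ : κ → Type u} [∀ i, Fintype (γ i)] [∀ i, Fintype (δ i)]
    (S : (∀ i, γ i) → K) (T : (∀ i, δ i) → K) :
    tRank (tProd S T) ≤ tRank S * tRank T := by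
  obtain ⟨v, hv⟩ := exists_eq_sum_prod S
  obtain ⟨w, hw⟩ := exists_eq_sum_prod T
  refine tRank_le (fun l ↦ Sum.rec (v (finProdFinEquiv.symm l).1) (w (finProdFinEquiv.symm l).2))
    fun x ↦ ?_
  rw [← finProdFinEquiv.sum_comp, Fintype.sum_prod_type]
  simp only [Fintype.prod_sum_type, Equiv.symm_apply_apply]
  exact (congrArg₂ (· * ·) (hv _) (hw _)).trans (Finset.sum_mul_sum _ _ _ _)

end

/-- The triple `(x, y, z)` as an index of a `3`-tensor. -/
def tripleIndex {γ : Fin 3 → Type*} (x : γ 0) (y : γ 1) (z : γ 2) : ∀ i, γ i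
  | 0 => x
  | 1 => y
  | 2 => z

/-- The matrix of entries of a `3`-tensor whose first index is `c`. For a tensor in
`K² ⊗ Kⁿ ⊗ Kᵐ`, the slices `0` and `1` are the two matrices of the pencil. -/
def slice {γ : Fin 3 → Type*} (T : (∀ i, γ i) → K) (c : γ 0) : Matrix (γ 1) (γ 2) K :=
  Matrix.of fun y z ↦ T (tripleIndex c y z)

section

variable {γ : Fin 3 → Type*} {T : (∀ i, γ i) → K} {R : ℕ}

lemma slice_tKron {δ : Fin 3 → Type*} (S : (∀ i, γ i) → K) (T : (∀ i, δ i) → K)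
    (c : γ 0) (c' : δ 0) : slice (tKron S T) (c, c') = slice S c ⊗ₖ slice T c' := by
  ext ⟨y, y'⟩ ⟨z, z'⟩
  refine congrArg₂ (· * ·) (congrArg S (funext fun i ↦ ?_)) (congrArg T (funext fun i ↦ ?_)) <;>
    fin_cases i <;> rfl

variable [∀ i, Fintype (γ i)]

lemma tRank_le_of_slice (a : Fin R → γ 0 → K) (u : Fin R → γ 1 → K) (w : Fin R → γ 2 → K)
    (h : ∀ x y z, slice T x y z = ∑ l, a l x * u l y * w l z) : tRank T ≤ R := by
  refine tRank_le (fun l i ↦ match i with | 0 => a l | 1 => u l | 2 => w l) fun x ↦ ?_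
  have hx : T x = slice T (x 0) (x 1) (x 2) := by
    refine congrArg T (funext fun i ↦ ?_)
    fin_cases i <;> rfl
  simp only [hx, h, Fin.prod_univ_three]

lemma exists_slice_eq_sum (T : (∀ i, γ i) → K) :
    ∃ (a : Fin (tRank T) → γ 0 → K) (u : Fin (tRank T) → γ 1 → K) (w : Fin (tRank T) → γ 2 → K),
      ∀ x y z, slice T x y z = ∑ l, a l x * u l y * w l z := by
  obtain ⟨v, hv⟩ := exists_eq_sum_prod T
  refine ⟨fun l ↦ v l 0, fun l ↦ v l 1, fun l ↦ v l 2, fun x y z ↦ ?_⟩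
  exact (hv _).trans (Finset.sum_congr rfl fun l _ ↦ Fin.prod_univ_three _)

lemma tRank_le_of_slice_eq_mul {c : γ 0} (hc : ∀ x, x = c) (U : Matrix (γ 1) (Fin R) K)
    (V : Matrix (Fin R) (γ 2) K) (h : U * V = slice T c) : tRank T ≤ R :=
  tRank_le_of_slice (fun _ _ ↦ 1) (fun l y ↦ U y l) V fun x y z ↦ by
    rw [hc x, ← h]
    simp [Matrix.mul_apply]

lemma pencilRankLE_slice (T : (∀ i, γ i) → K) (c c' : γ 0) :
    PencilRankLE (slice T c).mulVecLin (slice T c').mulVecLin (tRank T) := by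
  obtain ⟨a, u, w, h⟩ := exists_slice_eq_sum T
  have hslice (x : γ 0) :
      (slice T x).mulVecLin = ∑ l, a l x • (dotProductBilin K K (w l)).smulRight (u l) := by
    ext v y
    simp only [Matrix.mulVecLin_apply, Matrix.mulVec, dotProduct, h, Finset.sum_mul]
    rw [Finset.sum_comm]
    simp [dotProduct, Finset.mul_sum, mul_left_comm, mul_comm]
  exact ⟨fun l ↦ a l c, fun l ↦ a l c', fun l ↦ dotProductBilin K K (w l), u, hslice c, hslice c'⟩

lemma tRank_le_of_pencilRankLE {c c' : γ 0} (hc : ∀ x, x = c ∨ x = c')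
    (h : PencilRankLE (slice T c).mulVecLin (slice T c').mulVecLin R) : tRank T ≤ R := by
  classical
  obtain ⟨a, b, φ, u, hA, hB⟩ := h
  have entry (x y z) : slice T x y z = (slice T x).mulVecLin (Pi.single z 1) y := by simp
  refine tRank_le_of_slice (fun l x ↦ if x = c then a l else b l) u
    (fun l z ↦ φ l (Pi.single z 1)) fun x y z ↦ ?_
  by_cases hx : x = c
  · subst hx
    rw [entry, hA]
    simp [mul_assoc, mul_comm (u _ _)]
  · obtain rfl := (hc x).resolve_left hx
    rw [entry, hB]
    simp [hx, mul_assoc, mul_comm (u _ _)]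

end

end TensorRank

section Kronecker

variable {K l m n p : Type*} [Field K] [Fintype l] [Fintype n]

lemma exists_rank_factorization (M : Matrix l n K) :
    ∃ (U : Matrix l (Fin M.rank) K) (V : Matrix (Fin M.rank) n K)
      (P : Matrix (Fin M.rank) l K) (Q : Matrix n (Fin M.rank) K),
      U * V = M ∧ P * M * Q = 1 := by
  classical
  let e : LinearMap.range M.mulVecLin ≃ₗ[K] Fin M.rank → K := (finBasis K _).equivFun
  let U := (LinearMap.range M.mulVecLin).subtype ∘ₗ e.symm.toLinearMap
  let V := e.toLinearMap ∘ₗ M.mulVecLin.rangeRestrict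
  obtain ⟨P, hP⟩ := U.exists_leftInverse_of_injective
    (LinearMap.ker_eq_bot.mpr (Subtype.val_injective.comp e.symm.injective))
  obtain ⟨Q, hQ⟩ := V.exists_rightInverse_of_surjective
    (LinearMap.range_eq_top.mpr (e.surjective.comp M.mulVecLin.surjective_rangeRestrict))
  have hUV : U.toMatrix' * V.toMatrix' = M := by
    have hcomp : U ∘ₗ V = M.toLin' := by
      ext x
      simp [U, V]
    rw [← LinearMap.toMatrix'_comp, hcomp, LinearMap.toMatrix'_toLin']
  refine ⟨U.toMatrix', V.toMatrix', P.toMatrix', Q.toMatrix', hUV, ?_⟩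
  calc P.toMatrix' * M * Q.toMatrix'
      = P.toMatrix' * U.toMatrix' * (V.toMatrix' * Q.toMatrix') := by
        simp only [← hUV, Matrix.mul_assoc]
    _ = 1 := by
        rw [← LinearMap.toMatrix'_comp, ← LinearMap.toMatrix'_comp, hP, hQ, LinearMap.toMatrix'_id,
          Matrix.one_mul]

variable {R : ℕ}

lemma PencilRankLE.compLeft_mulVecLin {ι : Type*} [Fintype ι] [DecidableEq ι] {A B : Matrix m n K}
    (h : PencilRankLE (A ⊗ₖ (1 : Matrix ι ι K)).mulVecLin (B ⊗ₖ (1 : Matrix ι ι K)).mulVecLin R) :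
    PencilRankLE (A.mulVecLin.compLeft ι) (B.mulVecLin.compLeft ι) R := by
  let f : (ι → n → K) →ₗ[K] n × ι → K :=
    LinearMap.funLeft K K Prod.swap ∘ₗ (LinearEquiv.curry K K ι n).symm.toLinearMap
  let g : (m × ι → K) →ₗ[K] ι → m → K :=
    (LinearEquiv.curry K K ι m).toLinearMap ∘ₗ LinearMap.funLeft K K Prod.swap
  have hcomp (C : Matrix m n K) :
      C.mulVecLin.compLeft ι = g ∘ₗ (C ⊗ₖ (1 : Matrix ι ι K)).mulVecLin ∘ₗ f := by
    ext x i j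
    simp [f, g, Matrix.mulVec, dotProduct, Fintype.sum_prod_type, Matrix.one_apply,
      LinearMap.funLeft]
  rw [hcomp, hcomp]
  exact h.comp g f

lemma PencilRankLE.of_kronecker {ι : Type*} [Finite ι] [DecidableEq ι] [Finite m] [Fintype p]
    {A B : Matrix m n K} {M : Matrix l p K}
    (P : Matrix ι l K) (Q : Matrix p ι K) (hPQ : P * M * Q = 1)
    (h : PencilRankLE (A ⊗ₖ M).mulVecLin (B ⊗ₖ M).mulVecLin R) :
    PencilRankLE (A.mulVecLin.compLeft ι) (B.mulVecLin.compLeft ι) R := by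
  classical
  have := Fintype.ofFinite ι
  have := Fintype.ofFinite m
  have hmul (C : Matrix m n K) : (C ⊗ₖ (1 : Matrix ι ι K)).mulVecLin =
      ((1 : Matrix m m K) ⊗ₖ P).mulVecLin ∘ₗ (C ⊗ₖ M).mulVecLin ∘ₗ
        ((1 : Matrix n n K) ⊗ₖ Q).mulVecLin := by
    rw [← Matrix.mulVecLin_mul, ← Matrix.mulVecLin_mul, ← Matrix.mul_kronecker_mul,
      ← Matrix.mul_kronecker_mul, Matrix.mul_one, Matrix.one_mul, ← Matrix.mul_assoc, hPQ]
  refine compLeft_mulVecLin ?_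
  rw [hmul, hmul]
  exact h.comp _ _

end Kronecker

lemma tRank_mul_tRank_le_tRank_tKron {K : Type*} [Field K] [IsAlgClosed K] {γ δ : Fin 3 → Type*}
    [∀ i, Fintype (γ i)] [∀ i, Fintype (δ i)] (t : (∀ i, γ i) → K) (s : (∀ i, δ i) → K)
    {c c' : γ 0} (hc : ∀ x, x = c ∨ x = c') {e : δ 0} (he : ∀ x, x = e) :
    tRank t * tRank s ≤ tRank (tKron t s) := by
  classical
  obtain ⟨U, V, P, Q, hUV, hPQ⟩ := exists_rank_factorization (slice s e)
  have hcopies : PencilRankLE ((slice t c).mulVecLin.compLeft (Fin (slice s e).rank))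
      ((slice t c').mulVecLin.compLeft _) (tRank (tKron t s)) := by
    refine .of_kronecker P Q hPQ ?_
    rw [← slice_tKron, ← slice_tKron]
    exact pencilRankLE_slice (tKron t s) (c, e) (c', e)
  obtain ⟨F, hF, hle⟩ := exists_pencilRankLE_of_compLeft hcopies
  rw [Fintype.card_fin, mul_comm] at hle
  exact (Nat.mul_le_mul (tRank_le_of_pencilRankLE hc hF)
    (tRank_le_of_slice_eq_mul he U V hUV)).trans hle

theorem pencil_rank_mult_general {K : Type*} [Field K] [IsAlgClosed K] (d d' n m : ℕ)
    (s : (∀ i : Fin 3, Fin (![1, d, d'] i)) → K) (t : (∀ i : Fin 3, Fin (![2, n, m] i)) → K) :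
    tRank (tKron t s) = tRank t * tRank s ∧ tRank (tProd t s) = tRank t * tRank s := by
  have hKP := tRank_tKron_le_tRank_tProd t s
  have hP := tRank_tProd_le t s
  have hK : tRank t * tRank s ≤ tRank (tKron t s) :=
    tRank_mul_tRank_le_tRank_tKron t s (c := (0 : Fin 2)) (c' := (1 : Fin 2))
      (Fin.forall_fin_two.mpr ⟨.inl rfl, .inr rfl⟩) (e := (0 : Fin 1)) Fin.eq_zero
  exact ⟨(hKP.trans hP).antisymm hK, hP.antisymm (hK.trans hKP)⟩

/-- for `s ∈ ℂ ⊗ ℂ^d ⊗ ℂ^d` and a matrix pencil `t ∈ ℂ² ⊗ ℂⁿ ⊗ ℂᵐ`,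
`rank(t ⊠ s) = rank(t ⊗ s) = rank(t)·rank(s)`. -/
theorem pencil_rank_mult (d n m : ℕ)
    (s : (∀ i : Fin 3, Fin (![1, d, d] i)) → ℂ)
    (t : (∀ i : Fin 3, Fin (![2, n, m] i)) → ℂ) :
    tRank (tKron t s) = tRank t * tRank s ∧
    tRank (tProd t s) = tRank t * tRank s :=
  pencil_rank_mult_general d d n m s t
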